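/- arXiv:math/0610827 — 2 statements merged into one kernel-verified Lean document; each statement's English description precedes it below -/
import Mathlib

section
/- For k even, k ≥ 2, and fixed i < 0, ∑_{γ∈Γ_k} l_i(γ)² summed appropriately over levels satisfies ∑_{γ∈Γ_k} ∑_{i<0} l_i(γ)² = k·2^k, where l_i(γ) is the number of crossings of γ with the line y = i + 1/2. -/
/-- `γ` is a closed ±1-step path of length `k` whose maximum level is `0`. -/
def IsGammaPath (k : ℕ) (γ : Fin (k + 1) → ℤ) : Prop :=
  γ 0 = γ (Fin.last k) ∧
  (∀ u : Fin k, |γ u.succ - γ u.castSucc| = 1) ∧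
  (∀ u, γ u ≤ 0) ∧ (∃ u, γ u = 0)

/-- Number of crossings of `γ` with the horizontal line `y = i + 1/2`, i.e. the
number of steps `u` with `{γ u, γ (u+1)} = {i, i+1}`. -/
noncomputable def crossCount (k : ℕ) (i : ℤ) (γ : Fin (k + 1) → ℤ) : ℕ :=
  Nat.card {u : Fin k | ({γ u.castSucc, γ u.succ} : Set ℤ) = {i, i + 1}}

/-!
On a closed path every edge `{i, i + 1}` is traversed upwards as often as downwards, so
`l_i(γ) ^ 2` is four times the number of pairs consisting of an up-step and a down-step across
`{i, i + 1}`. As all levels are at most `0`, summing over `i < 0` gives four times the number of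
pairs `(u, v)` of an up-step and a down-step across a common edge.

A path in `Γ_k` is determined by its set of up-steps, an arbitrary `S ⊆ {0, …, k - 1}` with
`2 * #S = k`, and `u ∈ S`, `v ∉ S` are across a common edge iff `S` contains exactly half of the
interval between `u` and `v`. For given `u` and `v` at distance `d` there are `c (d - 1)` choices
for `S` strictly between them and `c (k - 1 - d)` outside, where `c n` counts the balanced subsets
of an `n`-element set. This is symmetric under `d ↦ k - d`, so summing over `v` gives
`∑ c a * c b` over `a + b = k - 2`, a convolution of central binomial coefficients equal to
`2 ^ (k - 2)`; the sum over `u` multiplies it by `k`.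
-/

open Finset

section CentralBinom

theorem two_mul_sum_antidiagonal_fst_mul {R : Type*} [CommSemiring R] (f : ℕ → R) (n : ℕ) :
    2 * ∑ x ∈ antidiagonal n, (x.1 : R) * (f x.1 * f x.2) =
      n * ∑ x ∈ antidiagonal n, f x.1 * f x.2 := by
  have swap : ∑ x ∈ antidiagonal n, (x.1 : R) * (f x.1 * f x.2) =
      ∑ x ∈ antidiagonal n, (x.2 : R) * (f x.1 * f x.2) := by
    rw [← Nat.sum_antidiagonal_swap]
    exact sum_congr rfl fun x _ => by rw [Prod.fst_swap, Prod.snd_swap, mul_comm (f x.2)]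
  calc 2 * ∑ x ∈ antidiagonal n, (x.1 : R) * (f x.1 * f x.2)
      = ∑ x ∈ antidiagonal n, ((x.1 : R) + x.2) * (f x.1 * f x.2) := by
        rw [two_mul]
        nth_rw 2 [swap]
        simp only [← sum_add_distrib, add_mul]
    _ = n * ∑ x ∈ antidiagonal n, f x.1 * f x.2 := by
        rw [mul_sum]
        refine sum_congr rfl fun x hx => ?_
        rw [← HasAntidiagonal.mem_antidiagonal.1 hx, Nat.cast_add]

theorem sum_antidiagonal_succ_fst_mul_centralBinom (f : ℕ → ℕ) (n : ℕ) :
    ∑ x ∈ antidiagonal (n + 1), x.1 * (x.1.centralBinom * f x.2) =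
      4 * ∑ x ∈ antidiagonal n, x.1 * (x.1.centralBinom * f x.2) +
        2 * ∑ x ∈ antidiagonal n, x.1.centralBinom * f x.2 := by
  rw [Nat.sum_antidiagonal_succ, mul_sum, mul_sum, ← sum_add_distrib, zero_mul, zero_add]
  refine sum_congr rfl fun x _ => ?_
  rw [← mul_assoc, Nat.succ_mul_centralBinom_succ]
  ring

theorem sum_antidiagonal_centralBinom_mul_centralBinom (n : ℕ) :
    ∑ x ∈ antidiagonal n, x.1.centralBinom * x.2.centralBinom = 4 ^ n := by
  induction n with
  | zero => simp
  | succ n ih =>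
    have weighted := two_mul_sum_antidiagonal_fst_mul Nat.centralBinom n
    have weighted_succ := two_mul_sum_antidiagonal_fst_mul Nat.centralBinom (n + 1)
    simp only [Nat.cast_id] at weighted weighted_succ
    rw [sum_antidiagonal_succ_fst_mul_centralBinom, ih] at weighted_succ
    rw [ih] at weighted
    refine Nat.eq_of_mul_eq_mul_left n.succ_pos ?_
    rw [Nat.succ_eq_add_one, ← weighted_succ, pow_succ]
    linarith

end CentralBinom

section BalancedSubsets

variable {α : Type*}

/-- The number of subsets of an `n`-element set that contain exactly half of its elements; this is
also the number of closed `±1`-step paths of length `n` with a given starting point. -/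
def balancedCount (n : ℕ) : ℕ :=
  if Even n then (n / 2).centralBinom else 0

theorem balancedCount_two_mul (n : ℕ) : balancedCount (2 * n) = n.centralBinom := by
  simp [balancedCount]

theorem balancedCount_of_odd {n : ℕ} (hn : Odd n) : balancedCount n = 0 :=
  if_neg (Nat.not_even_iff_odd.2 hn)

theorem card_filter_powerset_two_mul_card_eq (A : Finset α) :
    #{T ∈ A.powerset | 2 * #T = #A} = balancedCount #A := by
  rcases Nat.even_or_odd' #A with ⟨m, hm | hm⟩
  · have half : ({T ∈ A.powerset | 2 * #T = #A} : Finset _) = powersetCard m A := by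
      rw [powersetCard_eq_filter]
      exact filter_congr fun T _ => by omega
    rw [half, card_powersetCard, hm, balancedCount_two_mul, Nat.centralBinom]
  · rw [balancedCount_of_odd ⟨m, hm⟩, card_eq_zero, filter_eq_empty_iff]
    intro T _
    omega

theorem sum_antidiagonal_balancedCount_mul_balancedCount (n : ℕ) :
    ∑ x ∈ antidiagonal (2 * n), balancedCount x.1 * balancedCount x.2 = 4 ^ n := by
  rw [← sum_antidiagonal_centralBinom_mul_centralBinom]
  symm
  refine sum_of_injOn (fun x => (2 * x.1, 2 * x.2)) ?_ ?_ ?_ ?_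
  · rintro ⟨a, b⟩ - ⟨c, d⟩ - h
    simp only [Prod.mk.injEq] at h ⊢
    omega
  · rintro ⟨a, b⟩ h
    simp only [mem_coe, HasAntidiagonal.mem_antidiagonal] at h ⊢
    omega
  · rintro ⟨a, b⟩ h hab
    rcases Nat.even_or_odd' a with ⟨m, rfl | rfl⟩
    · rw [HasAntidiagonal.mem_antidiagonal] at h
      exact absurd ⟨(m, n - m), by grind [HasAntidiagonal.mem_antidiagonal], by grind⟩ hab
    · rw [balancedCount_of_odd ⟨m, rfl⟩, zero_mul]
  · simp [balancedCount_two_mul]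

variable [DecidableEq α]

theorem card_filter_inter_and_inter_compl [Fintype α] (A : Finset α) (P Q : Finset α → Prop)
    [DecidablePred P] [DecidablePred Q] :
    #{S : Finset α | P (S ∩ A) ∧ Q (S ∩ Aᶜ)} =
      #{T ∈ A.powerset | P T} * #{U ∈ Aᶜ.powerset | Q U} := by
  have inter_union {T U : Finset α} (hT : T ⊆ A) (hU : U ⊆ Aᶜ) :
      (T ∪ U) ∩ A = T ∧ (T ∪ U) ∩ Aᶜ = U := by
    have hTU : Disjoint T Aᶜ := disjoint_compl_right.mono_left hT
    have hUT : Disjoint U A := disjoint_compl_left.mono_left hU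
    rw [union_inter_distrib_right, union_inter_distrib_right, inter_eq_left.2 hT,
      inter_eq_left.2 hU, disjoint_iff_inter_eq_empty.1 hTU, disjoint_iff_inter_eq_empty.1 hUT,
      union_empty, empty_union]
    exact ⟨rfl, rfl⟩
  rw [← card_product]
  refine card_nbij' (fun S => (S ∩ A, S ∩ Aᶜ)) (fun x => x.1 ∪ x.2) ?_ ?_ ?_ ?_
  · intro S hS
    simpa using hS
  · rintro ⟨T, U⟩ h
    simp only [coe_product, coe_filter, mem_powerset, Set.mem_prod, Set.mem_ofPred_eq] at h
    obtain ⟨⟨hT, hP⟩, hU, hQ⟩ := h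
    simp [inter_union hT hU, hP, hQ]
  · intro S _
    simp [← inter_union_distrib_left]
  · rintro ⟨T, U⟩ h
    simp only [coe_product, coe_filter, mem_powerset, Set.mem_prod, Set.mem_ofPred_eq] at h
    simp [inter_union h.1.1 h.2.1]

theorem card_filter_powerset_mem_notMem {A : Finset α} {u v : α} (hu : u ∈ A) (hv : v ∈ A)
    (huv : u ≠ v) :
    #{T ∈ A.powerset | u ∈ T ∧ v ∉ T ∧ 2 * #T = #A} = balancedCount (#A - 2) := by
  have card_sdiff : #((A.erase u).erase v) + 2 = #A := by
    rw [← card_erase_add_one hu, ← card_erase_add_one (mem_erase.2 ⟨huv.symm, hv⟩)]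
  rw [show #A - 2 = #((A.erase u).erase v) by omega, ← card_filter_powerset_two_mul_card_eq]
  refine card_nbij' (fun T => T.erase u) (fun T => insert u T) ?_ ?_ ?_ ?_
  · intro T hT
    simp only [coe_filter, mem_powerset, Set.mem_ofPred_eq] at hT ⊢
    obtain ⟨hTA, huT, hvT, hT⟩ := hT
    have := card_erase_add_one huT
    exact ⟨by grind, by omega⟩
  · intro T hT
    simp only [coe_filter, mem_powerset, Set.mem_ofPred_eq] at hT ⊢
    obtain ⟨hTA, hT⟩ := hT
    have huT : u ∉ T := by grind
    rw [card_insert_of_notMem huT]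
    exact ⟨by grind, mem_insert_self u T, by grind, by omega⟩
  · intro T hT
    simp only [coe_filter, Set.mem_ofPred_eq] at hT
    exact insert_erase hT.2.1
  · intro T hT
    simp only [coe_filter, mem_powerset, Set.mem_ofPred_eq] at hT
    exact erase_insert (by grind)

theorem card_filter_balanced_mem_notMem [Fintype α] {A : Finset α} {u v : α} (hu : u ∈ A)
    (hv : v ∈ A) (huv : u ≠ v) :
    #{S : Finset α | 2 * #S = Fintype.card α ∧ u ∈ S ∧ v ∉ S ∧ 2 * #(S ∩ A) = #A} =
      balancedCount (#A - 2) * balancedCount (Fintype.card α - #A) := by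
  rw [← card_compl, ← card_filter_powerset_mem_notMem hu hv huv,
    ← card_filter_powerset_two_mul_card_eq Aᶜ, ← card_filter_inter_and_inter_compl]
  congr 1
  ext S
  have card_split : #S = #(S ∩ A) + #(S ∩ Aᶜ) := by
    rw [← sdiff_eq_inter_compl, card_inter_add_card_sdiff]
  have univ_split : Fintype.card α = #A + #Aᶜ := (card_add_card_compl A).symm
  simp only [mem_filter, mem_univ, true_and, mem_inter, hu, hv, and_true]
  grind

end BalancedSubsets

theorem sum_erase_natAbs_sub {M : Type*} [AddCommMonoid M] {k : ℕ} {g : ℕ → M}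
    (hg : ∀ d, 0 < d → d < k → g (k - d) = g d) (u : Fin k) :
    ∑ v ∈ univ.erase u, g (v - u : ℤ).natAbs = ∑ d ∈ Ico 1 k, g d := by
  have : NeZero k := ⟨u.pos.ne'⟩
  have val_sub (v : Fin k) : (v - u).val = if u ≤ v then v.val - u.val else k + v - u := by
    split_ifs with h
    · exact Fin.sub_val_of_le h
    · exact Fin.coe_sub_iff_lt.2 (not_le.1 h)
  -- The distance `|v - u|` is the residue of `v - u` modulo `k`, or `k` minus it.
  refine sum_nbij (fun v => (v - u).val) ?_ ?_ ?_ ?_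
  · intro v hv
    have := Fin.val_ne_of_ne (ne_of_mem_erase hv)
    simp only [mem_Ico, val_sub, Fin.le_def]
    split_ifs <;> omega
  · exact fun v _ w _ h => sub_left_injective (Fin.val_injective h)
  · intro d hd
    rw [coe_Ico, Set.mem_Ico] at hd
    refine ⟨⟨d, hd.2⟩ + u, ?_, by simp⟩
    simp only [coe_erase, coe_univ, Set.mem_sdiff, Set.mem_univ, true_and,
      Set.mem_singleton_iff, add_eq_right, Fin.ext_iff, Fin.val_zero]
    omega
  · intro v hv
    have := Fin.val_ne_of_ne (ne_of_mem_erase hv)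
    rw [val_sub]
    split_ifs with h <;> rw [Fin.le_def] at h
    · exact congrArg g (by omega)
    · rw [← hg _ (by omega) (by omega)]
      exact congrArg g (by omega)

section SameEdgePairs

variable {k : ℕ}

/-- For a set `S` of up-steps, the pairs of an up-step `u` and a down-step `v` which traverse the
same edge: the steps from the earlier to the later of the two have as many ups as downs. -/
def upDownPairs (S : Finset (Fin k)) : Finset (Fin k × Fin k) :=
  {x | x.1 ∈ S ∧ x.2 ∉ S ∧ 2 * #(S ∩ uIcc x.1 x.2) = #(uIcc x.1 x.2)}

theorem card_filter_mem_upDownPairs {u v : Fin k} (huv : u ≠ v) :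
    #{S : Finset (Fin k) | 2 * #S = k ∧ (u, v) ∈ upDownPairs S} =
      balancedCount ((v - u : ℤ).natAbs - 1) * balancedCount (k - 1 - (v - u : ℤ).natAbs) := by
  have h := card_filter_balanced_mem_notMem (left_mem_uIcc (a := u) (b := v)) right_mem_uIcc huv
  simp only [upDownPairs, mem_filter, mem_univ, true_and]
  rw [Fintype.card_fin] at h
  rw [h, Fin.card_uIcc, Nat.sub_add_eq, Nat.sub_right_comm k]
  rfl

theorem sum_card_filter_mem_upDownPairs {n : ℕ} (u : Fin (2 * (n + 1))) :
    ∑ v, #{S : Finset (Fin (2 * (n + 1))) | 2 * #S = 2 * (n + 1) ∧ (u, v) ∈ upDownPairs S} =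
      4 ^ n := by
  calc ∑ v, #{S : Finset (Fin (2 * (n + 1))) | 2 * #S = 2 * (n + 1) ∧ (u, v) ∈ upDownPairs S}
      = ∑ v ∈ univ.erase u,
          balancedCount ((v - u : ℤ).natAbs - 1) *
            balancedCount (2 * (n + 1) - 1 - (v - u : ℤ).natAbs) := by
        refine (sum_subset_zero_on_sdiff (erase_subset u univ) (fun v hv => ?_) fun v hv => ?_).symm
        · obtain rfl : v = u := by simpa using hv
          simp +contextual [upDownPairs]
        · exact (card_filter_mem_upDownPairs (ne_of_mem_erase hv).symm).symm
    _ = ∑ d ∈ Ico 1 (2 * (n + 1)),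
          balancedCount (d - 1) * balancedCount (2 * (n + 1) - 1 - d) := by
        refine sum_erase_natAbs_sub
          (g := fun d => balancedCount (d - 1) * balancedCount (2 * (n + 1) - 1 - d)) ?_ u
        intro d _ hd
        rw [mul_comm]
        congr 2 <;> omega
    _ = ∑ x ∈ antidiagonal (2 * n), balancedCount x.1 * balancedCount x.2 := by
        rw [Nat.sum_antidiagonal_eq_sum_range_succ fun a b => balancedCount a * balancedCount b,
          sum_Ico_eq_sum_range]
        refine sum_congr (congrArg range (by omega)) fun d _ => ?_
        congr 2 <;> omega
    _ = 4 ^ n := sum_antidiagonal_balancedCount_mul_balancedCount n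

theorem sum_card_upDownPairs (n : ℕ) :
    ∑ S : Finset (Fin (2 * (n + 1))) with 2 * #S = 2 * (n + 1), #(upDownPairs S) =
      2 * (n + 1) * 4 ^ n := by
  calc _ = ∑ x, #{S : Finset (Fin (2 * (n + 1))) | 2 * #S = 2 * (n + 1) ∧ x ∈ upDownPairs S} := by
        simpa only [bipartiteAbove, bipartiteBelow, filter_filter, filter_univ_mem] using
          sum_card_bipartiteAbove_eq_sum_card_bipartiteBelow
            (s := ({S | 2 * #S = 2 * (n + 1)} : Finset (Finset (Fin (2 * (n + 1))))))
            (t := univ) fun S x => x ∈ upDownPairs S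
    _ = ∑ _u : Fin (2 * (n + 1)), 4 ^ n := by
        rw [Fintype.sum_prod_type]
        simp only [sum_card_filter_mem_upDownPairs]
    _ = 2 * (n + 1) * 4 ^ n := by simp

end SameEdgePairs

theorem finsum_mem_card_filter_mul_card_filter {ι κ β R : Type*} [DecidableEq β]
    [NonAssocSemiring R] {I : Set β} {s : Finset ι} (t : Finset κ) {e : ι → β} (e' : κ → β)
    (he : ∀ u ∈ s, e u ∈ I) :
    ∑ᶠ i ∈ I, (#{u ∈ s | e u = i} : R) * #{v ∈ t | e' v = i} =
      #{x ∈ s ×ˢ t | e x.1 = e' x.2} := by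
  rw [finsum_mem_eq_sum_of_subset (t := s.image e)]
  · rw [card_eq_sum_card_fiberwise (f := fun x => e x.1) (t := s.image e), Nat.cast_sum]
    · refine sum_congr rfl fun i _ => ?_
      rw [← Nat.cast_mul, ← card_product, ← filter_product, filter_filter]
      congr 2
      exact filter_congr fun x _ => by grind
    · intro x hx
      simp only [coe_filter, mem_product, Set.mem_ofPred_eq] at hx
      exact mem_image_of_mem e hx.1.1
  · rintro i ⟨-, hi⟩
    obtain ⟨u, hu⟩ : ({u ∈ s | e u = i} : Finset ι).Nonempty := by
      rw [nonempty_iff_ne_empty]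
      exact fun h => hi (by simp [h])
    rw [mem_filter] at hu
    exact mem_image.2 ⟨u, hu⟩
  · simpa [Set.subset_def] using he

section UpSteps

variable {k : ℕ} {γ δ : Fin (k + 1) → ℤ}

/-- A path all of whose steps are `1` or `-1`; it need not be closed, and its maximum is free. -/
def HasUnitSteps (γ : Fin (k + 1) → ℤ) : Prop :=
  ∀ u : Fin k, |γ u.succ - γ u.castSucc| = 1

/-- The set of up-steps of a path, which determines a `±1`-step path up to translation. -/
def upSteps (γ : Fin (k + 1) → ℤ) : Finset (Fin k) :=
  {u | γ u.castSucc < γ u.succ}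

/-- The `u`-th step, `1` or `-1`, of a path with set of up-steps `S`. -/
def stepSign (S : Finset (Fin k)) (u : Fin k) : ℤ :=
  if u ∈ S then 1 else -1

theorem sum_stepSign (S A : Finset (Fin k)) :
    ∑ u ∈ A, stepSign S u = 2 * #(S ∩ A) - #A := by
  have card_split := card_filter_add_card_filter_not (s := A) (· ∈ S)
  rw [filter_mem_eq_inter, inter_comm] at card_split
  simp only [stepSign, sum_ite, sum_const, nsmul_eq_mul, filter_mem_eq_inter, inter_comm A S]
  omega

theorem IsGammaPath.hasUnitSteps (hγ : IsGammaPath k γ) : HasUnitSteps γ :=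
  hγ.2.1

theorem HasUnitSteps.sub_eq_stepSign (hγ : HasUnitSteps γ) (u : Fin k) :
    γ u.succ - γ u.castSucc = stepSign (upSteps γ) u := by
  have := (abs_eq zero_le_one).1 (hγ u)
  simp only [stepSign, upSteps, mem_filter, mem_univ, true_and]
  split_ifs <;> omega

theorem HasUnitSteps.mem_upSteps_iff (hγ : HasUnitSteps γ) {u : Fin k} :
    u ∈ upSteps γ ↔ γ u.succ = γ u.castSucc + 1 := by
  have := hγ.sub_eq_stepSign u
  unfold stepSign at this
  grind

theorem HasUnitSteps.notMem_upSteps_iff (hγ : HasUnitSteps γ) {u : Fin k} :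
    u ∉ upSteps γ ↔ γ u.castSucc = γ u.succ + 1 := by
  have := hγ.sub_eq_stepSign u
  unfold stepSign at this
  grind

theorem sum_succ_sub_castSucc {M : Type*} [AddCommGroup M] (f : Fin (k + 1) → M) :
    ∑ u : Fin k, (f u.succ - f u.castSucc) = f (Fin.last k) - f 0 := by
  rw [sum_sub_distrib, sub_eq_sub_iff_add_eq_add, add_comm, ← Fin.sum_univ_succ,
    Fin.sum_univ_castSucc, add_comm]

theorem HasUnitSteps.two_mul_card_upSteps_eq_iff (hγ : HasUnitSteps γ) :
    2 * #(upSteps γ) = k ↔ γ 0 = γ (Fin.last k) := by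
  have h := sum_succ_sub_castSucc γ
  simp only [hγ.sub_eq_stepSign, sum_stepSign, inter_univ, card_univ, Fintype.card_fin] at h
  omega

theorem HasUnitSteps.mem_upDownPairs_iff (hγ : HasUnitSteps γ) {u v : Fin k} :
    (u, v) ∈ upDownPairs (upSteps γ) ↔
      u ∈ upSteps γ ∧ v ∉ upSteps γ ∧ γ u.castSucc = γ v.succ := by
  simp only [upDownPairs, mem_filter, mem_univ, true_and]
  refine and_congr_right fun hu => and_congr_right fun hv => ?_
  have hsum := sum_stepSign (upSteps γ) (uIcc u v)
  simp only [← hγ.sub_eq_stepSign] at hsum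
  rw [hγ.mem_upSteps_iff] at hu
  rw [hγ.notMem_upSteps_iff] at hv
  rcases le_total u v with h | h
  · rw [uIcc_of_le h, Fin.sum_Icc_sub h] at *
    omega
  · rw [uIcc_of_ge h, Fin.sum_Icc_sub h] at *
    omega

theorem HasUnitSteps.crossCount_eq_add (hγ : HasUnitSteps γ) (i : ℤ) :
    crossCount k i γ =
      #{u ∈ upSteps γ | γ u.castSucc = i} + #{v ∈ (upSteps γ)ᶜ | γ v.succ = i} := by
  have crossing_iff (u : Fin k) : ({γ u.castSucc, γ u.succ} : Set ℤ) = {i, i + 1} ↔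
      u ∈ upSteps γ ∧ γ u.castSucc = i ∨ u ∉ upSteps γ ∧ γ u.succ = i := by
    rw [Set.pair_eq_pair_iff, hγ.notMem_upSteps_iff, hγ.mem_upSteps_iff]
    omega
  rw [crossCount, ← card_union_of_disjoint, ← Nat.card_eq_finsetCard]
  · exact Nat.card_congr (Equiv.subtypeEquivRight fun u => by simp [crossing_iff])
  · exact disjoint_filter_filter disjoint_compl_right

theorem HasUnitSteps.card_upcrossings_eq_card_downcrossings (hγ : HasUnitSteps γ)
    (hclosed : γ 0 = γ (Fin.last k)) (i : ℤ) :
    #{u ∈ upSteps γ | γ u.castSucc = i} = #{v ∈ (upSteps γ)ᶜ | γ v.succ = i} := by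
  -- The left-hand side telescopes to `0` when summed over a closed path.
  have net_crossing (u : Fin k) :
      ((if i < γ u.succ then 1 else 0) - if i < γ u.castSucc then 1 else 0 : ℤ) =
        (if u ∈ upSteps γ ∧ γ u.castSucc = i then 1 else 0) -
          if u ∉ upSteps γ ∧ γ u.succ = i then 1 else 0 := by
    have := (abs_eq zero_le_one).1 (hγ u)
    simp only [hγ.mem_upSteps_iff]
    split_ifs <;> omega
  have h := sum_succ_sub_castSucc fun j => if i < γ j then (1 : ℤ) else 0
  simp only [net_crossing, hclosed, sub_self, sum_sub_distrib, sum_boole] at h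
  rw [sub_eq_zero, Nat.cast_inj] at h
  convert! h using 2 <;> ext u <;> simp

theorem IsGammaPath.finsum_sq_crossCount (hγ : IsGammaPath k γ) :
    ∑ᶠ i ∈ {i : ℤ | i < 0}, (crossCount k i γ : ℤ) ^ 2 = 4 * #(upDownPairs (upSteps γ)) := by
  have hstep := hγ.hasUnitSteps
  obtain ⟨hclosed, -, hle, -⟩ := hγ
  have sq_crossCount (i : ℤ) : (crossCount k i γ : ℤ) ^ 2 =
      4 * (#{u ∈ upSteps γ | γ u.castSucc = i} * #{v ∈ (upSteps γ)ᶜ | γ v.succ = i}) := by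
    rw [hstep.crossCount_eq_add, hstep.card_upcrossings_eq_card_downcrossings hclosed]
    push_cast
    ring
  have neg_of_mem (u : Fin k) (hu : u ∈ upSteps γ) : γ u.castSucc < 0 := by
    have := hle u.succ
    rw [hstep.mem_upSteps_iff] at hu
    omega
  have pairs_eq : upDownPairs (upSteps γ) =
      {x ∈ upSteps γ ×ˢ (upSteps γ)ᶜ | γ x.1.castSucc = γ x.2.succ} := by
    ext ⟨u, v⟩
    simp [hstep.mem_upDownPairs_iff, and_assoc]
  simp only [sq_crossCount]
  rw [pairs_eq, ← mul_finsum_mem]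
  exact congrArg (4 * ·)
    (finsum_mem_card_filter_mul_card_filter (upSteps γ)ᶜ (fun v => γ v.succ) neg_of_mem)

theorem HasUnitSteps.eq_add_partialSum_stepSign (hγ : HasUnitSteps γ)
    (j : Fin (k + 1)) : γ j = γ 0 + Fin.partialSum (stepSign (upSteps γ)) j := by
  rw [← funext (hγ.sub_eq_stepSign)]
  simpa [neg_add_eq_sub] using (congrFun (Fin.partialSum_left_neg γ) j).symm

theorem IsGammaPath.eq_of_upSteps_eq (hγ : IsGammaPath k γ) (hδ : IsGammaPath k δ)
    (h : upSteps γ = upSteps δ) : γ = δ := by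
  have hγsum := hγ.hasUnitSteps.eq_add_partialSum_stepSign
  have hδsum := hδ.hasUnitSteps.eq_add_partialSum_stepSign
  rw [← h] at hδsum
  obtain ⟨-, -, hγle, a, ha⟩ := hγ
  obtain ⟨-, -, hδle, b, hb⟩ := hδ
  have same_start : γ 0 = δ 0 := by
    linarith [hγsum a, hγsum b, hδsum a, hδsum b, hγle b, hδle a]
  funext j
  rw [hγsum, hδsum, same_start]

theorem exists_isGammaPath_upSteps_eq {S : Finset (Fin k)} (hS : 2 * #S = k) :
    ∃ γ, IsGammaPath k γ ∧ upSteps γ = S := by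
  obtain ⟨a, ha⟩ := Finite.exists_max (Fin.partialSum (stepSign S))
  let γ (j : Fin (k + 1)) : ℤ := Fin.partialSum (stepSign S) j - Fin.partialSum (stepSign S) a
  have hdiff (u : Fin k) : γ u.succ - γ u.castSucc = stepSign S u := by
    simp only [γ, sub_sub_sub_cancel_right, Fin.partialSum_succ, add_sub_cancel_left]
  have hstep : HasUnitSteps γ := by
    intro u
    rw [hdiff, stepSign]
    split_ifs <;> simp
  have hup : upSteps γ = S := by
    ext u
    rw [hstep.mem_upSteps_iff, ← sub_eq_iff_eq_add', hdiff, stepSign]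
    split_ifs with hu <;> simp [hu]
  have hclosed : γ 0 = γ (Fin.last k) := by
    rwa [← hstep.two_mul_card_upSteps_eq_iff, hup]
  exact ⟨γ, ⟨hclosed, hstep, fun j => sub_nonpos.2 (ha j), a, sub_self _⟩, hup⟩

theorem bijOn_upSteps (k : ℕ) :
    Set.BijOn upSteps {γ | IsGammaPath k γ} {S : Finset (Fin k) | 2 * #S = k} :=
  ⟨fun _ hγ => hγ.hasUnitSteps.two_mul_card_upSteps_eq_iff.2 hγ.1,
    fun _ hγ _ hδ => hγ.eq_of_upSteps_eq hδ, fun _ => exists_isGammaPath_upSteps_eq⟩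

end UpSteps

theorem stmt7 (k : ℕ) (hk : Even k) (h2 : 2 ≤ k) :
    ∑ᶠ γ ∈ {γ : Fin (k + 1) → ℤ | IsGammaPath k γ},
        ∑ᶠ i ∈ {i : ℤ | i < 0}, (crossCount k i γ : ℤ) ^ 2
      = (k : ℤ) * 2 ^ k := by
  obtain ⟨n, rfl⟩ : ∃ n, k = 2 * (n + 1) := ⟨k / 2 - 1, by have := hk.two_dvd; omega⟩
  calc _ = ∑ᶠ S ∈ {S : Finset (Fin (2 * (n + 1))) | 2 * #S = 2 * (n + 1)},
          4 * (#(upDownPairs S) : ℤ) :=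
        finsum_mem_eq_of_bijOn upSteps (bijOn_upSteps _) fun _ hγ => hγ.finsum_sq_crossCount
    _ = 4 * (∑ S : Finset (Fin (2 * (n + 1))) with 2 * #S = 2 * (n + 1),
          #(upDownPairs S) : ℕ) := by
        rw [← coe_filter_univ, finsum_mem_coe_finset, ← mul_sum, Nat.cast_sum]
    _ = (2 * (n + 1) : ℕ) * 2 ^ (2 * (n + 1)) := by
        rw [sum_card_upDownPairs, pow_mul]
        push_cast
        ring
end

section
/- For α = 1/2, the distribution of T^{1/2}·W, where W is arcsine-distributed on [−2,2] and T is independent uniform on [0,1], is the semicircle law with density (1/(2π))·√(4−x²) on [−2,2]; equivalently, its even moments are C(k,k/2)/(k/2+1), the Catalan numbers. -/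
open MeasureTheory ProbabilityTheory

/-- The arcsine law on `[-2, 2]`, with density `1 / (π √(4 - x²))`. -/
noncomputable def arcsineLaw : Measure ℝ :=
  volume.withDensity fun x =>
    ENNReal.ofReal
      (Set.indicator (Set.Ioo (-2 : ℝ) 2)
        (fun x => 1 / (Real.pi * Real.sqrt (4 - x ^ 2))) x)

/-- The semicircle law on `[-2, 2]`, with density `√(4 - x²) / (2π)`. -/
noncomputable def semicircleLaw : Measure ℝ :=
  volume.withDensity fun x =>
    ENNReal.ofReal
      (Set.indicator (Set.Icc (-2 : ℝ) 2)
        (fun x => Real.sqrt (4 - x ^ 2) / (2 * Real.pi)) x)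

/-!
The arcsine law is the law of `2 cos θ` with `θ` uniform on `(0, π)`, and `2 √T` is distributed as
the distance from the origin to a uniform point of the upper half-disc of radius `2`. Hence
`√T * W = (2 √T) cos θ` is the abscissa of such a point, written in polar coordinates, and its
density at `x` is the length `√(4 - x²)` of a vertical slice divided by the area `2π`. The even
moments factor as `E[T ^ m] * E[W ^ (2 * m)]`, that is, `1 / (m + 1)` times a central binomial
coefficient.
-/

open Set ENNReal Real

section HalfDisc

theorem lintegral_regionBetween_comp_fst {α : Type*} [MeasurableSpace α] {μ : Measure α}
    [SFinite μ] {f g : α → ℝ} {s : Set α} (hf : Measurable f) (hg : Measurable g)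
    (hs : MeasurableSet s) {h : α → ℝ≥0∞} (hh : Measurable h) :
    ∫⁻ p in regionBetween f g s, h p.1 ∂(μ.prod volume) =
      ∫⁻ x in s, ENNReal.ofReal (g x - f x) * h x ∂μ := by
  have hregion := measurableSet_regionBetween hf hg hs
  have hmeas : Measurable fun p : α × ℝ => h p.1 := by fun_prop
  rw [← lintegral_indicator hregion, lintegral_prod _ (hmeas.indicator hregion).aemeasurable,
    ← lintegral_indicator hs]
  refine lintegral_congr fun x => ?_
  by_cases hx : x ∈ s
  · have hslice : (fun y => (regionBetween f g s).indicator (fun p => h p.1) (x, y)) =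
        (Ioo (f x) (g x)).indicator fun _ => h x := by
      ext y
      simp only [indicator, regionBetween, mem_ofPred_eq, hx, true_and]
    rw [hslice, lintegral_indicator_const measurableSet_Ioo, Real.volume_Ioo,
      indicator_of_mem hx, mul_comm]
  · simp [indicator, regionBetween, hx]

/-- The open upper half-disc of radius `|R|` centred at the origin of the plane. The product of
`√T` and an arcsine variable is realised as the abscissa of a uniform point of it. -/
def upperHalfDisc (R : ℝ) : Set (ℝ × ℝ) :=
  {p | 0 < p.2 ∧ p.1 ^ 2 + p.2 ^ 2 < R ^ 2}

theorem upperHalfDisc_eq_regionBetween (R : ℝ) :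
    upperHalfDisc R = regionBetween 0 (fun x => √(R ^ 2 - x ^ 2)) univ := by
  ext p
  simp only [upperHalfDisc, regionBetween, mem_ofPred_eq, mem_univ, true_and, mem_Ioo,
    Pi.zero_apply]
  refine and_congr_right fun hp => ?_
  rw [Real.lt_sqrt hp.le, lt_sub_iff_add_lt']

theorem measurableSet_upperHalfDisc (R : ℝ) : MeasurableSet (upperHalfDisc R) := by
  rw [upperHalfDisc_eq_regionBetween]
  exact measurableSet_regionBetween measurable_const (by fun_prop) .univ

theorem lintegral_upperHalfDisc_comp_fst (R : ℝ) {f : ℝ → ℝ≥0∞} (hf : Measurable f) :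
    ∫⁻ p in upperHalfDisc R, f p.1 = ∫⁻ x, ENNReal.ofReal √(R ^ 2 - x ^ 2) * f x := by
  rw [upperHalfDisc_eq_regionBetween, Measure.volume_eq_prod,
    lintegral_regionBetween_comp_fst measurable_zero (by fun_prop) .univ hf]
  simp only [Pi.zero_apply, sub_zero, Measure.restrict_univ]

theorem polarCoord_symm_mem_upperHalfDisc_iff {R : ℝ} (hR : 0 ≤ R) {p : ℝ × ℝ}
    (hp : p ∈ polarCoord.target) :
    polarCoord.symm p ∈ upperHalfDisc R ↔ p ∈ Ioo 0 R ×ˢ Ioo 0 π := by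
  obtain ⟨r, θ⟩ := p
  simp only [polarCoord_target, mem_prod, mem_Ioi, mem_Ioo] at hp
  obtain ⟨hr, hθ⟩ := hp
  have hsin : 0 < sin θ ↔ 0 < θ :=
    ⟨fun h => not_le.1 fun hθ' => h.not_ge (sin_nonpos_of_nonpos_of_neg_pi_le hθ' hθ.1.le),
      fun h => sin_pos_of_mem_Ioo ⟨h, hθ.2⟩⟩
  have hnorm : (r * cos θ) ^ 2 + (r * sin θ) ^ 2 = r ^ 2 := by
    linear_combination r ^ 2 * sin_sq_add_cos_sq θ
  simp only [upperHalfDisc, polarCoord_symm_apply, mem_ofPred_eq, mem_prod, mem_Ioo, hnorm,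
    mul_pos_iff_of_pos_left hr, hsin, sq_lt_sq₀ hr.le hR, hr, hθ.2, true_and, and_true]
  exact and_comm

theorem lintegral_upperHalfDisc_eq_polarCoord {R : ℝ} (hR : 0 ≤ R) (f : ℝ × ℝ → ℝ≥0∞) :
    ∫⁻ p in upperHalfDisc R, f p =
      ∫⁻ p in Ioo 0 R ×ˢ Ioo 0 π, ENNReal.ofReal p.1 * f (polarCoord.symm p) := by
  have hsubset : Ioo 0 R ×ˢ Ioo 0 π ⊆ polarCoord.target :=
    prod_mono Ioo_subset_Ioi_self (Ioo_subset_Ioo_left (neg_nonpos.2 pi_pos.le))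
  have hmeas : MeasurableSet (Ioo 0 R ×ˢ Ioo 0 π) := measurableSet_Ioo.prod measurableSet_Ioo
  rw [← lintegral_indicator (measurableSet_upperHalfDisc R), ← lintegral_comp_polarCoord_symm,
    ← inter_eq_self_of_subset_left hsubset, ← setLIntegral_indicator hmeas]
  refine setLIntegral_congr_fun polarCoord.open_target.measurableSet fun p hp => ?_
  simp only [indicator, polarCoord_symm_mem_upperHalfDisc_iff hR hp, smul_eq_mul, mul_ite,
    mul_zero]

theorem lintegral_upperHalfDisc_comp_fst_eq_polar {R : ℝ} (hR : 0 ≤ R) {f : ℝ → ℝ≥0∞}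
    (hf : Measurable f) :
    ∫⁻ p in upperHalfDisc R, f p.1 =
      ∫⁻ r in Ioo 0 R, ENNReal.ofReal r * ∫⁻ θ in Ioo 0 π, f (r * cos θ) := by
  rw [lintegral_upperHalfDisc_eq_polarCoord hR, Measure.volume_eq_prod, ← Measure.prod_restrict]
  simp only [polarCoord_symm_apply]
  rw [lintegral_prod (fun p => ENNReal.ofReal p.1 * f (p.1 * cos p.2)) (by fun_prop)]
  exact lintegral_congr fun _ => lintegral_const_mul' _ _ ofReal_ne_top

theorem lintegral_Ioo_comp_mul_sqrt {R : ℝ} (hR : 0 < R) (g : ℝ → ℝ≥0∞) :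
    ∫⁻ t in Ioo 0 1, g (R * √t) = ∫⁻ r in Ioo 0 R, ENNReal.ofReal (2 / R ^ 2 * r) * g r := by
  have hmono : StrictMonoOn (fun r => (r / R) ^ 2) (Icc 0 R) := fun a ha b _ hab =>
    pow_lt_pow_left₀ (div_lt_div_of_pos_right hab hR) (div_nonneg ha.1 hR.le) two_ne_zero
  have himage : (fun r => (r / R) ^ 2) '' Ioo 0 R = Ioo 0 1 := by
    rw [ContinuousOn.image_Ioo_of_strictMonoOn hR.le (by fun_prop) hmono]
    simp [hR.ne']
  have hderiv (r : ℝ) : HasDerivAt (fun r => (r / R) ^ 2) (2 / R ^ 2 * r) r := by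
    refine (((hasDerivAt_id r).div_const R).pow 2).congr_deriv ?_
    simp only [id, Nat.cast_ofNat, Nat.add_one_sub_one, pow_one]
    field_simp
  rw [← himage, lintegral_image_eq_lintegral_abs_deriv_mul measurableSet_Ioo
    (fun r _ => (hderiv r).hasDerivWithinAt) (hmono.injOn.mono Ioo_subset_Icc_self)]
  refine setLIntegral_congr_fun measurableSet_Ioo fun r hr => ?_
  have hr₀ : 0 < r := hr.1
  simp only [abs_of_pos (show 0 < 2 / R ^ 2 * r by positivity), sqrt_sq (div_pos hr₀ hR).le,
    mul_div_cancel₀ r hR.ne']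

theorem lintegral_lintegral_mul_sqrt_mul_cos {R : ℝ} (hR : 0 < R) {f : ℝ → ℝ≥0∞}
    (hf : Measurable f) :
    ∫⁻ t in Ioo 0 1, ∫⁻ θ in Ioo 0 π, f (R * √t * cos θ) =
      ENNReal.ofReal (2 / R ^ 2) * ∫⁻ x, ENNReal.ofReal √(R ^ 2 - x ^ 2) * f x := by
  calc ∫⁻ t in Ioo 0 1, ∫⁻ θ in Ioo 0 π, f (R * √t * cos θ)
    _ = ∫⁻ r in Ioo 0 R, ENNReal.ofReal (2 / R ^ 2 * r) * ∫⁻ θ in Ioo 0 π, f (r * cos θ) :=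
      lintegral_Ioo_comp_mul_sqrt hR fun r => ∫⁻ θ in Ioo 0 π, f (r * cos θ)
    _ = ENNReal.ofReal (2 / R ^ 2) *
        ∫⁻ r in Ioo 0 R, ENNReal.ofReal r * ∫⁻ θ in Ioo 0 π, f (r * cos θ) := by
      simp only [ENNReal.ofReal_mul (show 0 ≤ 2 / R ^ 2 by positivity), mul_assoc]
      exact lintegral_const_mul' _ _ ofReal_ne_top
    _ = ENNReal.ofReal (2 / R ^ 2) * ∫⁻ x, ENNReal.ofReal √(R ^ 2 - x ^ 2) * f x := by
      rw [← lintegral_upperHalfDisc_comp_fst_eq_polar hR.le hf,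
        lintegral_upperHalfDisc_comp_fst R hf]

end HalfDisc

section ArcsineLaw

instance : SFinite arcsineLaw := by
  unfold arcsineLaw
  infer_instance

theorem lintegral_arcsineLaw {f : ℝ → ℝ≥0∞} (hf : Measurable f) :
    ∫⁻ w, f w ∂arcsineLaw =
      ∫⁻ x in Ioo (-2) 2, ENNReal.ofReal (1 / (π * √(4 - x ^ 2))) * f x := by
  have hdensity : Measurable fun x : ℝ => 1 / (π * √(4 - x ^ 2)) := by fun_prop
  rw [arcsineLaw, lintegral_withDensity_eq_lintegral_mul _
    (hdensity.indicator measurableSet_Ioo).ennreal_ofReal hf,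
    ← lintegral_indicator measurableSet_Ioo]
  refine lintegral_congr fun x => ?_
  by_cases hx : x ∈ Ioo (-2 : ℝ) 2 <;> simp [hx]

theorem lintegral_Ioo_eq_lintegral_mul_cos {R : ℝ} (hR : 0 < R) (g : ℝ → ℝ≥0∞) :
    ∫⁻ x in Ioo (-R) R, g x = ∫⁻ θ in Ioo 0 π, ENNReal.ofReal (R * sin θ) * g (R * cos θ) := by
  have hanti : StrictAntiOn (fun θ => R * cos θ) (Icc 0 π) := fun a ha b hb hab =>
    mul_lt_mul_of_pos_left (strictAntiOn_cos ha hb hab) hR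
  have himage : (fun θ => R * cos θ) '' Ioo 0 π = Ioo (-R) R := by
    rw [ContinuousOn.image_Ioo_of_strictAntiOn pi_pos.le (by fun_prop) hanti]
    simp
  rw [← himage, lintegral_image_eq_lintegral_abs_deriv_mul measurableSet_Ioo
    (fun θ _ => ((hasDerivAt_cos θ).const_mul R).hasDerivWithinAt)
    (hanti.injOn.mono Ioo_subset_Icc_self)]
  refine setLIntegral_congr_fun measurableSet_Ioo fun θ hθ => ?_
  have hsin := sin_pos_of_mem_Ioo hθ
  simp only [mul_neg, abs_neg, abs_of_pos (show 0 < R * sin θ by positivity)]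

theorem arcsineLaw_eq_map_two_mul_cos :
    arcsineLaw = (ENNReal.ofReal π⁻¹ • volume.restrict (Ioo 0 π)).map fun θ => 2 * cos θ := by
  refine Measure.ext_of_lintegral _ fun f hf => ?_
  rw [lintegral_arcsineLaw hf, lintegral_Ioo_eq_lintegral_mul_cos two_pos,
    lintegral_map hf (by fun_prop), lintegral_smul_measure, smul_eq_mul,
    ← lintegral_const_mul' _ _ ofReal_ne_top]
  refine setLIntegral_congr_fun measurableSet_Ioo fun θ hθ => ?_
  have hsin := sin_pos_of_mem_Ioo hθ
  have hsqrt : √(4 - (2 * cos θ) ^ 2) = 2 * sin θ := by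
    rw [← sqrt_sq (show 0 ≤ 2 * sin θ by positivity)]
    congr 1
    linear_combination -4 * sin_sq_add_cos_sq θ
  have hcancel : 2 * sin θ * (1 / (π * (2 * sin θ))) = π⁻¹ := by field_simp
  rw [← mul_assoc, ← ENNReal.ofReal_mul (by positivity), hsqrt, hcancel]

theorem integral_two_mul_cos_pow_even (m : ℕ) :
    ∫ θ in 0..π, (2 * cos θ) ^ (2 * m) = π * m.centralBinom := by
  induction m with
  | zero => simp
  | succ m ih =>
    have hcentral : ((m : ℝ) + 1) * (m + 1).centralBinom = 2 * (2 * m + 1) * m.centralBinom :=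
      mod_cast m.succ_mul_centralBinom_succ
    have hcos : ((m : ℝ) + 1) * ∫ θ in 0..π, (2 * cos θ) ^ (2 * (m + 1)) =
        2 * (2 * m + 1) * ∫ θ in 0..π, (2 * cos θ) ^ (2 * m) := by
      simp only [mul_pow, intervalIntegral.integral_const_mul, mul_add_one, integral_cos_pow,
        sin_pi, sin_zero, mul_zero, sub_zero, zero_div, zero_add]
      push_cast
      field_simp
      ring
    have hm : (m : ℝ) + 1 ≠ 0 := by positivity
    apply mul_left_cancel₀ hm
    rw [hcos, ih]
    linear_combination -π * hcentral

theorem integral_arcsineLaw_pow_even (m : ℕ) :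
    ∫ w, w ^ (2 * m) ∂arcsineLaw = m.centralBinom := by
  rw [arcsineLaw_eq_map_two_mul_cos, integral_map (by fun_prop) (by fun_prop),
    integral_smul_measure, ← integral_Ioc_eq_integral_Ioo,
    ← intervalIntegral.integral_of_le pi_pos.le, integral_two_mul_cos_pow_even,
    toReal_ofReal (inv_nonneg.2 pi_pos.le), smul_eq_mul, inv_mul_cancel_left₀ pi_ne_zero]

end ArcsineLaw

section SemicircleLaw

theorem semicircleLaw_eq_withDensity_sqrt :
    semicircleLaw = volume.withDensity fun x => ENNReal.ofReal (√(4 - x ^ 2) / (2 * π)) := by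
  have hsupport : Function.support (fun x : ℝ => √(4 - x ^ 2) / (2 * π)) ⊆ Icc (-2) 2 := by
    intro x hx
    have hsq : x ^ 2 ≤ 2 ^ 2 := by
      by_contra! hlt
      exact hx (by simp [sqrt_eq_zero_of_nonpos (show 4 - x ^ 2 ≤ 0 by linarith)])
    exact abs_le.1 (abs_le_of_sq_le_sq hsq two_pos.le)
  simp only [semicircleLaw, indicator_eq_self.2 hsupport]

theorem map_sqrt_mul_prod_arcsineLaw :
    ((volume.restrict (Icc (0 : ℝ) 1)).prod arcsineLaw).map (fun p => √p.1 * p.2) =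
      semicircleLaw := by
  refine Measure.ext_of_lintegral _ fun f hf => ?_
  have hinner (t : ℝ) : ∫⁻ w, f (√t * w) ∂arcsineLaw =
      ENNReal.ofReal π⁻¹ * ∫⁻ θ in Ioo 0 π, f (2 * √t * cos θ) := by
    rw [arcsineLaw_eq_map_two_mul_cos, lintegral_map (by fun_prop) (by fun_prop),
      lintegral_smul_measure, smul_eq_mul]
    simp only [mul_left_comm, mul_assoc]
  rw [lintegral_map hf (by fun_prop), lintegral_prod _ (by fun_prop),
    Measure.restrict_congr_set Ioo_ae_eq_Icc.symm]
  simp only [hinner]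
  rw [lintegral_const_mul' _ _ ofReal_ne_top, lintegral_lintegral_mul_sqrt_mul_cos two_pos hf,
    semicircleLaw_eq_withDensity_sqrt,
    lintegral_withDensity_eq_lintegral_mul _ (by fun_prop) hf, ← mul_assoc,
    ← ENNReal.ofReal_mul (by positivity), ← lintegral_const_mul' _ _ ofReal_ne_top]
  refine lintegral_congr fun x => ?_
  rw [← mul_assoc, ← ENNReal.ofReal_mul (by positivity), Pi.mul_apply]
  congr 2
  norm_num
  field_simp

theorem integral_Icc_sqrt_pow_even (m : ℕ) :
    ∫ t in Icc (0 : ℝ) 1, √t ^ (2 * m) = 1 / (m + 1) := by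
  rw [setIntegral_congr_fun measurableSet_Icc (g := fun t => t ^ m)
    fun t ht => by simp only [pow_mul, sq_sqrt ht.1],
    integral_Icc_eq_integral_Ioc, ← intervalIntegral.integral_of_le zero_le_one, integral_pow]
  simp

theorem integral_semicircleLaw_pow_even (m : ℕ) :
    ∫ x, x ^ (2 * m) ∂semicircleLaw = catalan m := by
  have hcatalan : ((m : ℝ) + 1) * catalan m = m.centralBinom :=
    mod_cast succ_mul_catalan_eq_centralBinom m
  rw [← map_sqrt_mul_prod_arcsineLaw, integral_map (by fun_prop) (by fun_prop)]
  simp only [mul_pow]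
  rw [integral_prod_mul (fun t => √t ^ (2 * m)) fun w => w ^ (2 * m), integral_Icc_sqrt_pow_even,
    integral_arcsineLaw_pow_even, ← hcatalan]
  field_simp

end SemicircleLaw

theorem stmt13 {Ω : Type*} [MeasurableSpace Ω] (μ : Measure Ω) [IsProbabilityMeasure μ]
    (W T : Ω → ℝ) (hW : Measurable W) (hT : Measurable T)
    (hlawW : μ.map W = arcsineLaw)
    (hlawT : μ.map T = volume.restrict (Set.Icc (0 : ℝ) 1))
    (hind : IndepFun T W μ) :
    μ.map (fun ω => T ω ^ ((1 : ℝ) / 2) * W ω) = semicircleLaw ∧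
    ∀ k : ℕ, Even k →
      ∫ ω, (T ω ^ ((1 : ℝ) / 2) * W ω) ^ k ∂μ = k.choose (k / 2) / (k / 2 + 1) := by
  simp only [← sqrt_eq_rpow]
  have hjoint := (indepFun_iff_map_prod_eq_prod_map_map hT.aemeasurable hW.aemeasurable).1 hind
  have hlaw : μ.map (fun ω => √(T ω) * W ω) = semicircleLaw := by
    rw [← map_sqrt_mul_prod_arcsineLaw, ← hlawT, ← hlawW, ← hjoint,
      Measure.map_map (by fun_prop) (by fun_prop)]
    rfl
  refine ⟨hlaw, fun k hk => ?_⟩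
  obtain ⟨m, rfl⟩ := hk.exists_two_nsmul
  have hcatalan : ((m : ℝ) + 1) * catalan m = (2 * m).choose m :=
    mod_cast succ_mul_catalan_eq_centralBinom m
  rw [← integral_map (f := fun x => x ^ (2 • m)) (by fun_prop) (by fun_prop), hlaw, smul_eq_mul,
    integral_semicircleLaw_pow_even, Nat.mul_div_cancel_left m two_pos, ← hcatalan]
  push_cast
  field_simp
end
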